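/- Let R be a strongly connected self-relation on a finite set X and let q ≥ 1 divide the length of every cycle of R (i.e. for every n ≥ 1, if there exists x with R^n x x then q ∣ n). Then any two walks between the same pair of points have congruent lengths modulo q: for all x, y ∈ X and all m, n ≥ 1, if R^m x y and R^n x y then m ≡ n (mod q). -/

import Mathlib

/-- The Dowker complex `K_R` of a relation `R : X → Y → Prop`: the set of
nonempty finite subsets `σ ⊆ X` such that there is a `y` with `R x y` for all `x ∈ σ`. -/
def dowkerK {X Y : Type*} (R : X → Y → Prop) : Set (Finset X) :=
  {σ | σ.Nonempty ∧ ∃ y, ∀ x ∈ σ, R x y}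

/-- The Dowker complex `L_R` of a relation `R : X → Y → Prop`: the set of
nonempty finite subsets `τ ⊆ Y` such that there is an `x` with `R x y` for all `y ∈ τ`. -/
def dowkerL {X Y : Type*} (R : X → Y → Prop) : Set (Finset Y) :=
  {τ | τ.Nonempty ∧ ∃ x, ∀ y ∈ τ, R x y}

/-- Composition of relations: `relComp R₁ R₂` is the paper's `R₂ ∘ R₁`,
i.e. `(R₂ ∘ R₁) x z ↔ ∃ y, R₁ x y ∧ R₂ y z`. -/
def relComp {X Y Z : Type*} (R₁ : X → Y → Prop) (R₂ : Y → Z → Prop) : X → Z → Prop :=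
  fun x z => ∃ y, R₁ x y ∧ R₂ y z

/-- Powers of a self-relation: `R^0` is equality and `R^(n+1) = R ∘ R^n`. -/
def relPow {X : Type*} (R : X → X → Prop) : ℕ → X → X → Prop
  | 0 => Eq
  | n + 1 => relComp (relPow R n) R

theorem relPow_add {X : Type*} (R : X → X → Prop) (m n : ℕ) :
    relPow R (m + n) = relComp (relPow R m) (relPow R n) := by
  induction n with
  | zero => exact Relation.comp_eq.symm
  | succ n ih =>
    calc relPow R (m + (n + 1))
      _ = relComp (relComp (relPow R m) (relPow R n)) R := congrArg (relComp · R) ih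
      _ = relComp (relPow R m) (relPow R (n + 1)) := Relation.comp_assoc

theorem stmt15_general {X : Type*} {R : X → X → Prop} {x y : X} {q k m n : ℕ}
    (hdvd : ∀ l : ℕ, 1 ≤ l → relPow R l x x → q ∣ l) (hyx : relPow R k y x)
    (hm : relPow R m x y) (hn : relPow R n x y) : m ≡ n [MOD q] := by
  have dvd_add_return {l : ℕ} (hxy : relPow R l x y) : q ∣ l + k := by
    have hxx : relPow R (l + k) x x := by
      rw [relPow_add]
      exact ⟨y, hxy, hyx⟩
    rcases (l + k).eq_zero_or_pos with hzero | hpos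
    · exact hzero ▸ dvd_zero q
    · exact hdvd (l + k) hpos hxx
  have hmod : m + k ≡ n + k [MOD q] :=
    (dvd_add_return hm).modEq_zero_nat.trans (dvd_add_return hn).zero_modEq_nat
  exact hmod.add_right_cancel' k

theorem stmt15 {X : Type*} [Fintype X] (R : X → X → Prop)
    (hsc : ∀ x y : X, ∃ n : ℕ, 1 ≤ n ∧ relPow R n x y)
    (q : ℕ) (hq : 1 ≤ q)
    (hqdvd : ∀ n : ℕ, 1 ≤ n → (∃ x, relPow R n x x) → q ∣ n) :
    ∀ x y : X, ∀ m n : ℕ, 1 ≤ m → 1 ≤ n →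
      relPow R m x y → relPow R n x y → m ≡ n [MOD q] := by
  intro x y m n _ _ hm hn
  obtain ⟨k, -, hyx⟩ := hsc y x
  exact stmt15_general (fun l hl hxx => hqdvd l hl ⟨x, hxx⟩) hyx hm hn
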